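/- Let x be a solution of the system with output y, and suppose that Ψ(t) is invertible for every t ∈ (t0, τ]. Fix ℓ ∈ (0, 1/2], set R_ν := 2^(ν−1) for ν = 1, 2, …, and let k ≥ 1 be an integer with ‖x‖_{[t0,τ]} < R_k. Let (t_ν)_{ν≥k} be a strictly decreasing sequence in (t0, τ] with lim_{ν→∞} t_ν = t0 such that for every ν ≥ k and all continuous d1, d2 : [t0, t_ν] → ℝⁿ with ‖d1‖_{[t0,t_ν]} ≤ R_ν and ‖d2‖_{[t0,t_ν]} ≤ R_ν one has ‖F_{t_ν}(·; d1) − F_{t_ν}(·; d2)‖_{[t0,t_ν]} ≤ ℓ ‖d1 − d2‖_{[t0,t_ν]}. Let z_k : [t0, t_k] → ℝⁿ be any continuous function with ‖z_k‖_{[t0,t_k]} < R_k, and define recursively z_{ν+1}(t) := F_{t_ν}(t; z_ν restricted to [t0, t_ν]) for t ∈ [t0, t_ν], ν = k, k+1, …. Then: (i) ‖z_ν‖_{[t0,t_ν]} ≤ R_ν for all ν ≥ k; (ii) ‖z_{ν+1} − x‖_{[t0,t_ν]} ≤ ℓ^(ν+1−k) ‖z_k − x‖_{[t0,t_k]} for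 all ν ≥ k; and (iii) lim_{ν→∞} z_ν(t_ν) = x(t0). -/

import Mathlib

open MeasureTheory Matrix Set Filter Topology

noncomputable section

/-- `x` is a solution of `ẋ = A(t)x + g(t,x)` on `[t0, τ]` (integral form, componentwise). -/
def IsSolution (n : ℕ) (t0 τ : ℝ) (A : ℝ → Matrix (Fin n) (Fin n) ℝ)
    (g : ℝ → (Fin n → ℝ) → (Fin n → ℝ)) (x : ℝ → (Fin n → ℝ)) : Prop :=
  ContinuousOn x (Set.Icc t0 τ) ∧
    ∀ t ∈ Set.Icc t0 τ, ∀ i : Fin n,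
      x t i = x t0 i + ∫ s in t0..t, ((A s).mulVec (x s) i + g s (x s) i)

/-- `Φ` is the fundamental matrix of `ẋ = A(t)x` on `[t0, τ]`. -/
def IsFundamental (n : ℕ) (t0 τ : ℝ) (A : ℝ → Matrix (Fin n) (Fin n) ℝ)
    (Φ : ℝ → Matrix (Fin n) (Fin n) ℝ) : Prop :=
  (∀ i j : Fin n, ContinuousOn (fun t => Φ t i j) (Set.Icc t0 τ)) ∧
    ∀ t ∈ Set.Icc t0 τ, ∀ i j : Fin n,
      Φ t i j = (1 : Matrix (Fin n) (Fin n) ℝ) i j + ∫ s in t0..t, (A s * Φ s) i j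

/-- `Ψ(t) = ∫_{t0}^t Φ(s)ᵀ C(s)ᵀ C(s) Φ(s) ds` (entrywise integral). -/
def Psi (n k0 : ℕ) (t0 : ℝ) (C : ℝ → Matrix (Fin k0) (Fin n) ℝ)
    (Φ : ℝ → Matrix (Fin n) (Fin n) ℝ) (t : ℝ) : Matrix (Fin n) (Fin n) ℝ :=
  fun i j => ∫ s in t0..t, ((Φ s)ᵀ * (C s)ᵀ * C s * Φ s) i j

/-- `Ξ(t; z) = ∫_{t0}^t Φ(ρ)ᵀ C(ρ)ᵀ C(ρ) Φ(ρ) (∫_{t0}^ρ Φ(s)⁻¹ g(s, z(s)) ds) dρ`. -/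
def Xi (n k0 : ℕ) (t0 : ℝ) (C : ℝ → Matrix (Fin k0) (Fin n) ℝ)
    (Φ : ℝ → Matrix (Fin n) (Fin n) ℝ) (g : ℝ → (Fin n → ℝ) → (Fin n → ℝ))
    (z : ℝ → (Fin n → ℝ)) (t : ℝ) : Fin n → ℝ :=
  fun i => ∫ ρ in t0..t,
    ((Φ ρ)ᵀ * (C ρ)ᵀ * C ρ * Φ ρ).mulVec
      (fun i' => ∫ s in t0..ρ, ((Φ s)⁻¹).mulVec (g s (z s)) i') i

/-- The map `F_T(t; z)`. -/
def Fmap (n k0 : ℕ) (t0 : ℝ) (C : ℝ → Matrix (Fin k0) (Fin n) ℝ)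
    (Φ : ℝ → Matrix (Fin n) (Fin n) ℝ) (g : ℝ → (Fin n → ℝ) → (Fin n → ℝ))
    (y : ℝ → (Fin k0 → ℝ)) (T : ℝ) (z : ℝ → (Fin n → ℝ)) (t : ℝ) : Fin n → ℝ :=
  (Φ t).mulVec
      ((Psi n k0 t0 C Φ T)⁻¹.mulVec
        ((fun i => ∫ ρ in t0..T, ((Φ ρ)ᵀ * (C ρ)ᵀ).mulVec (y ρ) i)
          - Xi n k0 t0 C Φ g z T))
    + (Φ t).mulVec (fun i => ∫ ρ in t0..t, ((Φ ρ)⁻¹).mulVec (g ρ (z ρ)) i)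

/-- supremum norm of `f` over `[a, b]`. -/
def supN (n : ℕ) (a b : ℝ) (f : ℝ → (Fin n → ℝ)) : ℝ :=
  ⨆ t : Set.Icc a b, ‖f (t : ℝ)‖

/-- Regularity of the data `A`, `C`, `g` on `[t0, τ]`:  `A`, `C` measurable and bounded;
`g` measurable in `t`, continuous in `x`, bounded on bounded sets. -/
def RegularData (n k0 : ℕ) (t0 τ : ℝ) (A : ℝ → Matrix (Fin n) (Fin n) ℝ)
    (C : ℝ → Matrix (Fin k0) (Fin n) ℝ)
    (g : ℝ → (Fin n → ℝ) → (Fin n → ℝ)) : Prop :=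
  (∀ i j, Measurable fun t => A t i j) ∧
  (∃ M : ℝ, ∀ t ∈ Set.Icc t0 τ, ∀ i j, |A t i j| ≤ M) ∧
  (∀ i j, Measurable fun t => C t i j) ∧
  (∃ M : ℝ, ∀ t ∈ Set.Icc t0 τ, ∀ i j, |C t i j| ≤ M) ∧
  (∀ v : Fin n → ℝ, ∀ i, Measurable fun t => g t v i) ∧
  (∀ t ∈ Set.Icc t0 τ, Continuous (g t)) ∧
  (∀ R > (0:ℝ), ∃ M : ℝ, ∀ t ∈ Set.Icc t0 τ, ∀ v : Fin n → ℝ, ‖v‖ ≤ R → ‖g t v‖ ≤ M)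

/-!
By variation of constants, `x(t) = Φ(t) (x(t0) + ∫_{t0}^t Φ(s)⁻¹ g(s, x(s)) ds)`. Substituting this
into `∫_{t0}^T Φᵀ Cᵀ y` turns that integral into `Ψ(T) x(t0) + Ξ(T; x)`, so `x` is a fixed point of
`F_T` whenever `Ψ(T)` is invertible. Hence each step of the iteration contracts the distance to `x`
by the factor `ℓ`. That distance starts at no more than `2 R_k`, so the iterates after the first
have norm at most `(1 + 2ℓ) R_k ≤ R_ν`: they stay in the balls where the contraction hypothesis
applies. Finally `z_ν(t_ν) - x(t_ν)` vanishes geometrically while `x(t_ν) → x(t0)`.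
-/

section AbsolutelyContinuous

variable {X Y Z E : Type*} [PseudoMetricSpace X] [PseudoMetricSpace Y] [PseudoMetricSpace Z]
  [NormedAddCommGroup E] [NormedSpace ℝ E] {a b : ℝ}

theorem absolutelyContinuousOnInterval_of_dist_le {f : ℝ → X} {g : ℝ → Y} {h : ℝ → Z} {K L : ℝ}
    (hg : AbsolutelyContinuousOnInterval g a b) (hh : AbsolutelyContinuousOnInterval h a b)
    (hle : ∀ s ∈ uIcc a b, ∀ t ∈ uIcc a b,
      dist (f s) (f t) ≤ K * dist (g s) (g t) + L * dist (h s) (h t)) :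
    AbsolutelyContinuousOnInterval f a b := by
  have hlim := (Tendsto.const_mul K hg).add (Tendsto.const_mul L hh)
  rw [mul_zero, mul_zero, add_zero] at hlim
  refine squeeze_zero' (Eventually.of_forall fun E ↦ Finset.sum_nonneg fun i _ ↦ dist_nonneg) ?_
    hlim
  filter_upwards [mem_inf_of_right (mem_principal_self _)] with E hE
  rw [Finset.mul_sum, Finset.mul_sum, ← Finset.sum_add_distrib]
  exact Finset.sum_le_sum fun i hi ↦ hle _ (hE.1 i hi).1 _ (hE.1 i hi).2

theorem absolutelyContinuousOnInterval_integral {φ : ℝ → E} {c : ℝ}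
    (hφ : IntervalIntegrable φ volume a b) (hc : c ∈ uIcc a b) :
    AbsolutelyContinuousOnInterval (fun t ↦ ∫ s in c..t, φ s) a b := by
  have hnorm := hφ.norm.absolutelyContinuousOnInterval_intervalIntegral hc
  refine absolutelyContinuousOnInterval_of_dist_le (K := 1) (L := 0) hnorm hnorm
    fun s hs t ht ↦ ?_
  have hint : ∀ {r}, r ∈ uIcc a b → IntervalIntegrable φ volume c r := fun hr ↦
    hφ.mono_set (uIcc_subset_uIcc hc hr)
  rw [one_mul, zero_mul, add_zero, dist_eq_norm, Real.dist_eq,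
    intervalIntegral.integral_interval_sub_left (hint hs) (hint ht),
    intervalIntegral.integral_interval_sub_left (hint hs).norm (hint ht).norm]
  exact intervalIntegral.norm_integral_le_abs_integral_norm

theorem eq_add_integral_of_ae_hasDerivAt [CompleteSpace E] {f φ : ℝ → E}
    (hf : AbsolutelyContinuousOnInterval f a b) (hφ : IntervalIntegrable φ volume a b)
    (hderiv : ∀ᵐ t, t ∈ uIcc a b → HasDerivAt f (φ t) t) :
    f b = f a + ∫ t in a..b, φ t := by
  have hsub : AbsolutelyContinuousOnInterval (fun t ↦ f t - ∫ s in a..t, φ s) a b :=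
    hf.fun_sub (absolutelyContinuousOnInterval_integral hφ left_mem_uIcc)
  obtain ⟨C, hC⟩ := hsub.const_of_ae_hasDerivAt_zero (by
    filter_upwards [hderiv, hφ.ae_hasDerivAt_integral] with t hft hφt ht
    simpa only [sub_self] using (hft ht).fun_sub (hφt ht a left_mem_uIcc))
  have hend := (hC b right_mem_uIcc).trans (hC a left_mem_uIcc).symm
  rw [intervalIntegral.integral_same, sub_zero] at hend
  exact sub_eq_iff_eq_add.1 hend

theorem ae_hasDerivAt_of_eq_add_integral [CompleteSpace E] {f φ : ℝ → E} {c : E}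
    (hφ : IntervalIntegrable φ volume a b)
    (hf : ∀ t ∈ uIcc a b, f t = c + ∫ s in a..t, φ s) :
    ∀ᵐ t, t ∈ uIcc a b → HasDerivAt f (φ t) t := by
  have hmin : ∀ᵐ t : ℝ, t ≠ min a b := by simp [ae_iff]
  have hmax : ∀ᵐ t : ℝ, t ≠ max a b := by simp [ae_iff]
  filter_upwards [hφ.ae_hasDerivAt_integral, hmin, hmax] with t hderiv hmin hmax ht
  refine ((hderiv ht a left_mem_uIcc).const_add c).congr_of_eventuallyEq ?_
  filter_upwards [Icc_mem_nhds (ht.1.lt_of_ne' hmin) (ht.2.lt_of_ne hmax)] with s hs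
  exact hf s hs

theorem absolutelyContinuousOnInterval_of_eq_add_integral {f φ : ℝ → E} {c : E}
    (hφ : IntervalIntegrable φ volume a b)
    (hf : ∀ t ∈ uIcc a b, f t = c + ∫ s in a..t, φ s) :
    AbsolutelyContinuousOnInterval f a b := by
  have hint := absolutelyContinuousOnInterval_integral hφ left_mem_uIcc
  refine absolutelyContinuousOnInterval_of_dist_le (K := 1) (L := 0) hint hint fun s hs t ht ↦ ?_
  rw [hf s hs, hf t ht, dist_add_left, one_mul, zero_mul, add_zero]

end AbsolutelyContinuous

section VariationOfConstants

open scoped Ring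

variable {E : Type*} [NormedAddCommGroup E] [NormedSpace ℝ E] [CompleteSpace E] {a b : ℝ}

theorem absolutelyContinuousOnInterval_ringInverse_apply {Φ : ℝ → E →L[ℝ] E} {x : ℝ → E}
    (hΦ : AbsolutelyContinuousOnInterval Φ a b) (hx : AbsolutelyContinuousOnInterval x a b)
    (hunit : ∀ t ∈ uIcc a b, IsUnit (Φ t)) :
    AbsolutelyContinuousOnInterval (fun t ↦ (Φ t)⁻¹ʳ (x t)) a b := by
  have hinv : ContinuousOn (fun t ↦ (Φ t)⁻¹ʳ) (uIcc a b) := fun t ht ↦ by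
    obtain ⟨u, hu⟩ := hunit t ht
    have hcont : ContinuousAt Ring.inverse (Φ t) := hu ▸ NormedRing.inverse_continuousAt u
    exact hcont.comp_continuousWithinAt (hΦ.continuousOn t ht)
  obtain ⟨M, hM⟩ := isCompact_uIcc.exists_bound_of_continuousOn hinv
  obtain ⟨N, hN⟩ := isCompact_uIcc.exists_bound_of_continuousOn (hinv.clm_apply hx.continuousOn)
  refine absolutelyContinuousOnInterval_of_dist_le (K := M) (L := M * N) hx hΦ fun s hs t ht ↦ ?_
  have hcancel : ∀ r ∈ uIcc a b, ∀ v, (Φ r)⁻¹ʳ (Φ r v) = v := fun r hr v ↦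
    DFunLike.congr_fun (Ring.inverse_mul_cancel _ (hunit r hr)) v
  have hcancel' : ∀ r ∈ uIcc a b, ∀ v, Φ r ((Φ r)⁻¹ʳ v) = v := fun r hr v ↦
    DFunLike.congr_fun (Ring.mul_inverse_cancel _ (hunit r hr)) v
  have hsplit : (Φ s)⁻¹ʳ (x s) - (Φ t)⁻¹ʳ (x t)
      = (Φ s)⁻¹ʳ ((x s - x t) - (Φ s - Φ t) ((Φ t)⁻¹ʳ (x t))) := by
    rw [_root_.sub_apply, hcancel' t ht, sub_sub_sub_cancel_right, map_sub,
      hcancel s hs]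
  rw [dist_eq_norm, dist_eq_norm, dist_eq_norm, hsplit]
  have hM0 : 0 ≤ M := (norm_nonneg _).trans (hM s hs)
  calc _ ≤ M * (‖x s - x t‖ + ‖Φ s - Φ t‖ * N) := by
        refine ((Φ s)⁻¹ʳ.le_of_opNorm_le (hM s hs) _).trans ?_
        gcongr
        refine (norm_sub_le _ _).trans ?_
        gcongr
        exact (Φ s - Φ t).le_opNorm_of_le (hN t ht)
    _ = M * ‖x s - x t‖ + M * N * ‖Φ s - Φ t‖ := by ring

theorem hasDerivAt_ringInverse_apply {Φ : ℝ → E →L[ℝ] E} {x : ℝ → E} {A : E →L[ℝ] E} {f : E}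
    {t : ℝ} (hunit : IsUnit (Φ t)) (hΦ : HasDerivAt Φ (A * Φ t) t)
    (hx : HasDerivAt x (A (x t) + f) t) :
    HasDerivAt (fun s ↦ (Φ s)⁻¹ʳ (x s)) ((Φ t)⁻¹ʳ f) t := by
  obtain ⟨u, hu⟩ := hunit
  have hinv : HasFDerivAt Ring.inverse _ (Φ t) := hu ▸ hasFDerivAt_ringInverse (𝕜 := ℝ) u
  refine ((hinv.comp_hasDerivAt t hΦ).clm_apply hx).congr_deriv ?_
  have hcancel : (u : E →L[ℝ] E) ((↑u⁻¹ : E →L[ℝ] E) (x t)) = x t :=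
    DFunLike.congr_fun u.mul_inv (x t)
  simp [← hu, hcancel]

theorem variation_of_constants {Φ A : ℝ → E →L[ℝ] E} {x f : ℝ → E}
    (hAΦ : IntervalIntegrable (fun s ↦ A s * Φ s) volume a b)
    (hAx : IntervalIntegrable (fun s ↦ A s (x s) + f s) volume a b)
    (hf : IntervalIntegrable (fun s ↦ (Φ s)⁻¹ʳ (f s)) volume a b)
    (hΦ : ∀ t ∈ uIcc a b, Φ t = 1 + ∫ s in a..t, A s * Φ s)
    (hx : ∀ t ∈ uIcc a b, x t = x a + ∫ s in a..t, (A s (x s) + f s))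
    (hunit : ∀ t ∈ uIcc a b, IsUnit (Φ t)) :
    x b = Φ b (x a + ∫ s in a..b, (Φ s)⁻¹ʳ (f s)) := by
  have hac := absolutelyContinuousOnInterval_ringInverse_apply
    (absolutelyContinuousOnInterval_of_eq_add_integral hAΦ hΦ)
    (absolutelyContinuousOnInterval_of_eq_add_integral hAx hx) hunit
  have hderiv : ∀ᵐ t, t ∈ uIcc a b →
      HasDerivAt (fun s ↦ (Φ s)⁻¹ʳ (x s)) ((Φ t)⁻¹ʳ (f t)) t := by
    filter_upwards [ae_hasDerivAt_of_eq_add_integral hAΦ hΦ,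
      ae_hasDerivAt_of_eq_add_integral hAx hx] with t hΦt hxt ht
    exact hasDerivAt_ringInverse_apply (hunit t ht) (hΦt ht) (hxt ht)
  have hΦa : Φ a = 1 := by simpa using hΦ a left_mem_uIcc
  have hinv := eq_add_integral_of_ae_hasDerivAt hac hf hderiv
  rw [hΦa, Ring.inverse_one, one_apply_eq_self] at hinv
  rw [← hinv]
  exact (DFunLike.congr_fun (Ring.mul_inverse_cancel _ (hunit b right_mem_uIcc)) (x b)).symm

end VariationOfConstants

section MatrixValued

variable {m n F : Type*} [Fintype m] [Fintype n] [NormedAddCommGroup F] [NormedSpace ℝ F]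
  {a b : ℝ}

theorem linearMap_matrix_eq_sum {R V : Type*} [Semiring R] [AddCommMonoid V] [Module R V]
    [DecidableEq m] [DecidableEq n] (L : Matrix m n R →ₗ[R] V) (M : Matrix m n R) :
    L M = ∑ i, ∑ j, M i j • L (Matrix.single i j 1) := by
  conv_lhs => rw [matrix_eq_sum_single M]
  simp only [map_sum, ← map_smul, smul_single, smul_eq_mul, mul_one]

theorem intervalIntegrable_finsetSum {ι E : Type*} [NormedAddCommGroup E] {f : ι → ℝ → E}
    {s : Finset ι}
    (hf : ∀ i ∈ s, IntervalIntegrable (f i) volume a b) :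
    IntervalIntegrable (fun t ↦ ∑ i ∈ s, f i t) volume a b :=
  Finset.sum_fn s f ▸ IntervalIntegrable.sum s hf

theorem intervalIntegrable_linearMap_matrix {m n : Type*} [Finite m] [Finite n]
    {M : ℝ → Matrix m n ℝ} (L : Matrix m n ℝ →ₗ[ℝ] F)
    (hM : ∀ i j, IntervalIntegrable (fun s ↦ M s i j) volume a b) :
    IntervalIntegrable (fun s ↦ L (M s)) volume a b := by
  classical
  have := Fintype.ofFinite m
  have := Fintype.ofFinite n
  simp only [linearMap_matrix_eq_sum L (M _)]
  exact intervalIntegrable_finsetSum fun i _ ↦ intervalIntegrable_finsetSum fun j _ ↦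
    ⟨(hM i j).1.smul_const _, (hM i j).2.smul_const _⟩

theorem integral_linearMap_matrix {m n : Type*} [Finite m] [Finite n] [CompleteSpace F]
    {M : ℝ → Matrix m n ℝ} (L : Matrix m n ℝ →ₗ[ℝ] F)
    (hM : ∀ i j, IntervalIntegrable (fun s ↦ M s i j) volume a b) :
    ∫ s in a..b, L (M s) = L (of fun i j ↦ ∫ s in a..b, M s i j) := by
  classical
  have := Fintype.ofFinite m
  have := Fintype.ofFinite n
  have hterm : ∀ i j, IntervalIntegrable (fun s ↦ M s i j • L (Matrix.single i j 1)) volume a b :=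
    fun i j ↦ ⟨(hM i j).1.smul_const _, (hM i j).2.smul_const _⟩
  rw [linearMap_matrix_eq_sum L (of _)]
  simp only [linearMap_matrix_eq_sum L (M _), of_apply]
  rw [intervalIntegral.integral_finsetSum fun i _ ↦
    intervalIntegrable_finsetSum fun j _ ↦ hterm i j]
  refine Finset.sum_congr rfl fun i _ ↦ ?_
  rw [intervalIntegral.integral_finsetSum fun j _ ↦ hterm i j]
  simp only [intervalIntegral.integral_smul_const]

theorem integral_mulVec_const {m : Type*} {M : ℝ → Matrix m n ℝ} {v : n → ℝ} {i : m}
    (hM : ∀ j, IntervalIntegrable (fun s ↦ M s i j) volume a b) :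
    ∫ s in a..b, (M s *ᵥ v) i = ((of fun i j ↦ ∫ s in a..b, M s i j) *ᵥ v) i := by
  simp only [mulVec, dotProduct, of_apply]
  rw [intervalIntegral.integral_finsetSum fun j _ ↦ (hM j).mul_const (v j)]
  simp only [intervalIntegral.integral_mul_const]

theorem intervalIntegrable_mulVec_of_continuousOn {m : Type*} {M : ℝ → Matrix m n ℝ}
    {v : ℝ → n → ℝ}
    (hM : ∀ i j, IntervalIntegrable (fun s ↦ M s i j) volume a b)
    (hv : ∀ j, ContinuousOn (fun s ↦ v s j) (uIcc a b)) (i : m) :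
    IntervalIntegrable (fun s ↦ (M s *ᵥ v s) i) volume a b :=
  intervalIntegrable_finsetSum fun j _ ↦ (hM i j).mul_continuousOn (hv j)

theorem intervalIntegrable_continuousOn_mulVec {m : Type*} {M : ℝ → Matrix m n ℝ}
    {v : ℝ → n → ℝ}
    (hM : ∀ i j, ContinuousOn (fun s ↦ M s i j) (uIcc a b))
    (hv : ∀ j, IntervalIntegrable (fun s ↦ v s j) volume a b) (i : m) :
    IntervalIntegrable (fun s ↦ (M s *ᵥ v s) i) volume a b :=
  intervalIntegrable_finsetSum fun j _ ↦ (hv j).continuousOn_mul (hM i j)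

theorem continuousOn_inv_apply [DecidableEq n] {s : Set ℝ} {M : ℝ → Matrix n n ℝ}
    (hM : ContinuousOn M s) (hunit : ∀ t ∈ s, IsUnit (M t)) (i j : n) :
    ContinuousOn (fun t ↦ (M t)⁻¹ i j) s := by
  have hdet : ContinuousOn (fun t ↦ (M t).det⁻¹) s :=
    ((continuous_id.matrix_det).comp_continuousOn hM).inv₀ fun t ht ↦
      ((isUnit_iff_isUnit_det _).1 (hunit t ht)).ne_zero
  have hadj : ContinuousOn (fun t ↦ (M t).adjugate i j) s :=
    ((continuous_id.matrix_adjugate).matrix_elem i j).comp_continuousOn hM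
  exact (hdet.mul hadj).congr fun t _ ↦ by simp [inv_def]

theorem intervalIntegrable_of_eval {E : Type*} [NormedAddCommGroup E] {f : ℝ → n → E}
    (hf : ∀ i, IntervalIntegrable (fun s ↦ f s i) volume a b) :
    IntervalIntegrable f volume a b :=
  ⟨.of_eval fun i ↦ (hf i).1, .of_eval fun i ↦ (hf i).2⟩

theorem intervalIntegral_apply [CompleteSpace F] {f : ℝ → n → F}
    (hf : ∀ i, IntervalIntegrable (fun s ↦ f s i) volume a b) (i : n) :
    (∫ s in a..b, f s) i = ∫ s in a..b, f s i := by
  simp only [intervalIntegral, Pi.sub_apply, eval_integral fun i ↦ (hf i).1,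
    eval_integral fun i ↦ (hf i).2]

end MatrixValued

section MulVecCLM

open scoped Ring

variable {n : Type*} [Fintype n] [DecidableEq n] {a b : ℝ}

/-- The algebra isomorphism sending a square real matrix to the operator `v ↦ M *ᵥ v`, through
which the operator-valued calculus applies to matrices. -/
def mulVecCLM : Matrix n n ℝ ≃ₐ[ℝ] ((n → ℝ) →L[ℝ] (n → ℝ)) :=
  Matrix.toLinAlgEquiv'.trans (Module.End.toContinuousLinearMap _)

theorem mulVecCLM_apply (M : Matrix n n ℝ) (v : n → ℝ) : mulVecCLM M v = M *ᵥ v := rfl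

theorem ringInverse_mulVecCLM {M : Matrix n n ℝ} (hM : IsUnit M) :
    (mulVecCLM M)⁻¹ʳ = mulVecCLM M⁻¹ := by
  rw [← mul_one (mulVecCLM M)⁻¹ʳ, Ring.inverse_mul_eq_iff_eq_mul _ _ _ (hM.map mulVecCLM),
    ← map_mul, mul_nonsing_inv _ ((isUnit_iff_isUnit_det M).1 hM), map_one]

theorem mulVecCLM_eq_one_add_integral {Φ₁ : Matrix n n ℝ} {M : ℝ → Matrix n n ℝ}
    (hM : ∀ i j, IntervalIntegrable (fun s ↦ M s i j) volume a b)
    (hΦ : ∀ i j, Φ₁ i j = (1 : Matrix n n ℝ) i j + ∫ s in a..b, M s i j) :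
    mulVecCLM Φ₁ = 1 + ∫ s in a..b, mulVecCLM (M s) := by
  have hint : ∫ s in a..b, mulVecCLM (M s) = mulVecCLM (of fun i j ↦ ∫ s in a..b, M s i j) :=
    integral_linearMap_matrix mulVecCLM.toLinearMap hM
  rw [hint, ← map_one mulVecCLM, ← map_add]
  exact congrArg mulVecCLM (Matrix.ext hΦ)

/-- The integral `∫ₐᵗ Φ(s)⁻¹ f(s) ds` (taken componentwise) through which a forcing `f` enters the
variation of constants formula. -/
def duhamelIntegral (a : ℝ) (Φ : ℝ → Matrix n n ℝ) (f : ℝ → n → ℝ) (t : ℝ) : n → ℝ :=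
  fun i ↦ ∫ s in a..t, ((Φ s)⁻¹ *ᵥ f s) i

theorem intervalIntegrable_inv_mulVec {Φ : ℝ → Matrix n n ℝ} {f : ℝ → n → ℝ}
    (hΦ : ContinuousOn Φ (uIcc a b)) (hunit : ∀ t ∈ uIcc a b, IsUnit (Φ t))
    (hf : ∀ i, IntervalIntegrable (fun s ↦ f s i) volume a b) (i : n) :
    IntervalIntegrable (fun s ↦ ((Φ s)⁻¹ *ᵥ f s) i) volume a b :=
  intervalIntegrable_continuousOn_mulVec (continuousOn_inv_apply hΦ hunit) hf i

theorem continuousOn_duhamelIntegral {Φ : ℝ → Matrix n n ℝ} {f : ℝ → n → ℝ}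
    (hΦ : ContinuousOn Φ (uIcc a b)) (hunit : ∀ t ∈ uIcc a b, IsUnit (Φ t))
    (hf : ∀ i, IntervalIntegrable (fun s ↦ f s i) volume a b) :
    ContinuousOn (duhamelIntegral a Φ f) (uIcc a b) :=
  continuousOn_pi.2 fun i ↦ intervalIntegral.continuousOn_primitive_interval'
    (intervalIntegrable_inv_mulVec hΦ hunit hf i) left_mem_uIcc

theorem matrix_variation_of_constants {A Φ : ℝ → Matrix n n ℝ} {f x : ℝ → n → ℝ}
    (hA : ∀ i j, IntervalIntegrable (fun s ↦ A s i j) volume a b)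
    (hf : ∀ i, IntervalIntegrable (fun s ↦ f s i) volume a b)
    (hΦc : ContinuousOn Φ (uIcc a b))
    (hxc : ContinuousOn x (uIcc a b))
    (hΦ : ∀ t ∈ uIcc a b, ∀ i j, Φ t i j = (1 : Matrix n n ℝ) i j + ∫ s in a..t, (A s * Φ s) i j)
    (hx : ∀ t ∈ uIcc a b, ∀ i, x t i = x a i + ∫ s in a..t, ((A s *ᵥ x s) i + f s i))
    (hunit : ∀ t ∈ uIcc a b, IsUnit (Φ t)) :
    x b = Φ b *ᵥ (x a + duhamelIntegral a Φ f b) := by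
  have hmono : ∀ {t}, t ∈ uIcc a b → uIcc a t ⊆ uIcc a b := uIcc_subset_uIcc_left
  have hAΦ : ∀ i j, IntervalIntegrable (fun s ↦ (A s * Φ s) i j) volume a b := fun i j ↦
    intervalIntegrable_mulVec_of_continuousOn hA
      (fun l ↦ continuousOn_pi.1 (continuousOn_pi.1 hΦc l) j) i
  have hAx : ∀ i, IntervalIntegrable (fun s ↦ (A s *ᵥ x s + f s) i) volume a b := fun i ↦
    (intervalIntegrable_mulVec_of_continuousOn hA (continuousOn_pi.1 hxc) i).add (hf i)
  have hΦf : ∀ i, IntervalIntegrable (fun s ↦ ((Φ s)⁻¹ *ᵥ f s) i) volume a b :=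
    intervalIntegrable_inv_mulVec hΦc hunit hf
  have hinv : ∀ t ∈ uIcc a b, (Φ t)⁻¹ *ᵥ f t = (mulVecCLM (Φ t))⁻¹ʳ (f t) := fun t ht ↦ by
    rw [ringInverse_mulVecCLM (hunit t ht), mulVecCLM_apply]
  have hvoc : x b = mulVecCLM (Φ b) (x a + ∫ s in a..b, (mulVecCLM (Φ s))⁻¹ʳ (f s)) := by
    refine variation_of_constants (A := fun t ↦ mulVecCLM (A t)) ?_
      (intervalIntegrable_of_eval hAx)
      ((intervalIntegrable_of_eval hΦf).congr fun s hs ↦ hinv s (uIoc_subset_uIcc hs))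
      (fun t ht ↦ ?_) (fun t ht ↦ ?_) (fun t ht ↦ (hunit t ht).map mulVecCLM)
    · simp only [← map_mul]
      exact intervalIntegrable_linearMap_matrix mulVecCLM.toLinearMap hAΦ
    · simp only [← map_mul]
      exact mulVecCLM_eq_one_add_integral (fun i j ↦ (hAΦ i j).mono_set (hmono ht)) (hΦ t ht)
    · ext i
      exact (hx t ht i).trans (congrArg (x a i + ·)
        (intervalIntegral_apply (fun i ↦ (hAx i).mono_set (hmono ht)) i).symm)
  rw [hvoc, mulVecCLM_apply, ← intervalIntegral.integral_congr hinv]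
  exact congrArg (fun q ↦ Φ b *ᵥ (x a + q)) (funext (intervalIntegral_apply hΦf))

end MulVecCLM

section Caratheodory

variable {X Y : Type*} [NormedAddCommGroup X] [NormedAddCommGroup Y]

/-- The Carathéodory conditions on `[a, b]` for a time-dependent map `g`: strongly measurable in
time, continuous in space, and dominated by an integrable function of time on each ball. They make
`t ↦ g t (z t)` integrable for every continuous `z`. -/
structure IsCaratheodoryOn (a b : ℝ) (g : ℝ → X → Y) : Prop where
  stronglyMeasurable : ∀ v, StronglyMeasurable fun t ↦ g t v
  continuous : ∀ t ∈ Icc a b, Continuous (g t)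
  dominated : ∀ R, ∃ m : ℝ → ℝ, IntegrableOn m (Icc a b) ∧
    ∀ t ∈ Icc a b, ∀ v, ‖v‖ ≤ R → ‖g t v‖ ≤ m t

theorem aestronglyMeasurable_apply_of_continuous [SecondCountableTopology X] {α : Type*}
    [MeasurableSpace α] {μ : Measure α} {s : Set α} (hs : MeasurableSet s) {g : α → X → Y}
    {z : α → X}
    (hmeas : ∀ v, StronglyMeasurable fun t ↦ g t v) (hcont : ∀ t ∈ s, Continuous (g t))
    (hz : AEStronglyMeasurable z (μ.restrict s)) :
    AEStronglyMeasurable (fun t ↦ g t (z t)) (μ.restrict s) := by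
  classical
  borelize X
  have hind : StronglyMeasurable (Function.uncurry fun v ↦ s.indicator fun t ↦ g t v) := by
    refine stronglyMeasurable_uncurry_of_continuous_of_stronglyMeasurable (fun t ↦ ?_)
      fun v ↦ (hmeas v).indicator hs
    by_cases ht : t ∈ s
    · simpa only [indicator_of_mem ht] using hcont t ht
    · simpa only [indicator_of_notMem ht] using continuous_const
  refine (hind.comp_measurable
    (hz.stronglyMeasurable_mk.measurable.prodMk measurable_id)).aestronglyMeasurable.congr ?_
  filter_upwards [hz.ae_eq_mk, ae_restrict_mem hs] with t htz hts
  simp only [Function.comp_apply, Function.uncurry_apply_pair, id_eq, indicator_of_mem hts, ← htz]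

namespace IsCaratheodoryOn

variable {a b c : ℝ} {g : ℝ → X → Y}

theorem mono_right (hg : IsCaratheodoryOn a b g) (hcb : c ≤ b) : IsCaratheodoryOn a c g where
  stronglyMeasurable := hg.stronglyMeasurable
  continuous t ht := hg.continuous t (Icc_subset_Icc_right hcb ht)
  dominated R := by
    obtain ⟨m, hm, hle⟩ := hg.dominated R
    exact ⟨m, hm.mono_set (Icc_subset_Icc_right hcb),
      fun t ht ↦ hle t (Icc_subset_Icc_right hcb ht)⟩

theorem integrableOn_apply [SecondCountableTopology X] (hg : IsCaratheodoryOn a b g)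
    {z : ℝ → X} (hz : ContinuousOn z (Icc a b)) : IntegrableOn (fun t ↦ g t (z t)) (Icc a b) := by
  obtain ⟨R, hR⟩ := isCompact_Icc.exists_bound_of_continuousOn hz
  obtain ⟨m, hm, hle⟩ := hg.dominated R
  refine hm.mono' ?_ (ae_restrict_of_forall_mem measurableSet_Icc
    fun t ht ↦ hle t ht _ (hR t ht))
  exact aestronglyMeasurable_apply_of_continuous measurableSet_Icc hg.stronglyMeasurable
    hg.continuous (hz.aestronglyMeasurable measurableSet_Icc)

theorem intervalIntegrable_apply [SecondCountableTopology X] {n : Type*} [Fintype n]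
    {g : ℝ → X → n → ℝ}
    (hg : IsCaratheodoryOn a b g) (hab : a ≤ b) {z : ℝ → X} (hz : ContinuousOn z (Icc a b))
    (i : n) : IntervalIntegrable (fun t ↦ g t (z t) i) volume a b :=
  (intervalIntegrable_iff_integrableOn_Icc_of_le hab).2 ((hg.integrableOn_apply hz).eval i)

end IsCaratheodoryOn

end Caratheodory

section ObservedSystem

variable {n k0 : ℕ} {t0 τ T : ℝ} {A : ℝ → Matrix (Fin n) (Fin n) ℝ}
  {C : ℝ → Matrix (Fin k0) (Fin n) ℝ} {g : ℝ → (Fin n → ℝ) → (Fin n → ℝ)}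
  {Φ : ℝ → Matrix (Fin n) (Fin n) ℝ} {x z : ℝ → (Fin n → ℝ)} {y : ℝ → (Fin k0 → ℝ)}

theorem IsFundamental.continuousOn (hΦ : IsFundamental n t0 τ A Φ) :
    ContinuousOn Φ (Icc t0 τ) :=
  continuousOn_pi.2 fun i ↦ continuousOn_pi.2 (hΦ.1 i)

theorem IsFundamental.mono_right (hΦ : IsFundamental n t0 τ A Φ) (hT : T ≤ τ) :
    IsFundamental n t0 T A Φ :=
  ⟨fun i j ↦ (hΦ.1 i j).mono (Icc_subset_Icc_right hT),
    fun t ht ↦ hΦ.2 t (Icc_subset_Icc_right hT ht)⟩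

theorem IsSolution.mono_right (hx : IsSolution n t0 τ A g x) (hT : T ≤ τ) :
    IsSolution n t0 T A g x :=
  ⟨hx.1.mono (Icc_subset_Icc_right hT), fun t ht ↦ hx.2 t (Icc_subset_Icc_right hT ht)⟩

/-- The integrand `Φᵀ Cᵀ C Φ` of the observability Gramian `Ψ`. -/
def gramianDensity (C : ℝ → Matrix (Fin k0) (Fin n) ℝ) (Φ : ℝ → Matrix (Fin n) (Fin n) ℝ)
    (s : ℝ) : Matrix (Fin n) (Fin n) ℝ :=
  (Φ s)ᵀ * (C s)ᵀ * C s * Φ s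

theorem intervalIntegrable_gramianDensity (h0T : t0 ≤ T)
    (hC : ∀ i j, IntervalIntegrable (fun s ↦ ((C s)ᵀ * C s) i j) volume t0 T)
    (hΦ : ContinuousOn Φ (Icc t0 T)) (i j : Fin n) :
    IntervalIntegrable (fun s ↦ gramianDensity C Φ s i j) volume t0 T := by
  rw [← uIcc_of_le h0T] at hΦ
  have hentry : ∀ i j, ContinuousOn (fun s ↦ Φ s i j) (uIcc t0 T) := fun i ↦
    continuousOn_pi.1 (continuousOn_pi.1 hΦ i)
  have hCΦ : ∀ i j, IntervalIntegrable (fun s ↦ ((C s)ᵀ * C s * Φ s) i j) volume t0 T :=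
    fun i j ↦ intervalIntegrable_mulVec_of_continuousOn hC (fun l ↦ hentry l j) i
  simp only [gramianDensity, Matrix.mul_assoc (Φ _)ᵀ]
  exact intervalIntegrable_continuousOn_mulVec (fun i j ↦ hentry j i) (fun l ↦ hCΦ l j) i

theorem IsSolution.eq_mulVec_add_duhamelIntegral
    (hA : ∀ i j, IntervalIntegrable (fun s ↦ A s i j) volume t0 T)
    (hg : IsCaratheodoryOn t0 T g) (hΦ : IsFundamental n t0 T A Φ)
    (hunit : ∀ t ∈ Icc t0 T, IsUnit (Φ t)) (hx : IsSolution n t0 T A g x) (h0T : t0 ≤ T) :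
    x T = Φ T *ᵥ (x t0 + duhamelIntegral t0 Φ (fun s ↦ g s (x s)) T) := by
  have hf := hg.intervalIntegrable_apply h0T hx.1
  have hΦc := hΦ.continuousOn
  obtain ⟨hxc, hxeq⟩ := hx
  have hΦeq := hΦ.2
  rw [← uIcc_of_le h0T] at *
  exact matrix_variation_of_constants hA hf hΦc hxc hΦeq hxeq hunit

theorem integral_output_eq (h0T : t0 ≤ T)
    (hC : ∀ i j, IntervalIntegrable (fun s ↦ ((C s)ᵀ * C s) i j) volume t0 T)
    (hg : IsCaratheodoryOn t0 T g) (hΦ : ContinuousOn Φ (Icc t0 T))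
    (hunit : ∀ t ∈ Icc t0 T, IsUnit (Φ t)) (hz : ContinuousOn z (Icc t0 T)) {v : Fin n → ℝ}
    (hy : ∀ t ∈ Icc t0 T,
      y t = C t *ᵥ (Φ t *ᵥ (v + duhamelIntegral t0 Φ (fun s ↦ g s (z s)) t))) :
    (fun i ↦ ∫ ρ in t0..T, (((Φ ρ)ᵀ * (C ρ)ᵀ) *ᵥ y ρ) i)
      = Psi n k0 t0 C Φ T *ᵥ v + Xi n k0 t0 C Φ g z T := by
  have hG := intervalIntegrable_gramianDensity h0T hC hΦ
  have hf := hg.intervalIntegrable_apply h0T hz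
  rw [← uIcc_of_le h0T] at *
  have hq := continuousOn_duhamelIntegral hΦ hunit hf
  ext i
  have hsplit : ∀ ρ ∈ uIcc t0 T, (((Φ ρ)ᵀ * (C ρ)ᵀ) *ᵥ y ρ) i
      = (gramianDensity C Φ ρ *ᵥ v) i
        + (gramianDensity C Φ ρ *ᵥ duhamelIntegral t0 Φ (fun s ↦ g s (z s)) ρ) i := fun ρ hρ ↦ by
    rw [hy ρ hρ, mulVec_mulVec, mulVec_mulVec, mulVec_add]
    rfl
  rw [intervalIntegral.integral_congr hsplit, intervalIntegral.integral_add
    (intervalIntegrable_mulVec_of_continuousOn (v := fun _ ↦ v) hG (fun _ ↦ continuousOn_const) i)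
    (intervalIntegrable_mulVec_of_continuousOn hG (continuousOn_pi.1 hq) i),
    integral_mulVec_const (hG i)]
  rfl

theorem IsSolution.eqOn_Fmap
    (hA : ∀ i j, IntervalIntegrable (fun s ↦ A s i j) volume t0 τ)
    (hC : ∀ i j, IntervalIntegrable (fun s ↦ ((C s)ᵀ * C s) i j) volume t0 τ)
    (hg : IsCaratheodoryOn t0 τ g) (hΦ : IsFundamental n t0 τ A Φ)
    (hunit : ∀ t ∈ Icc t0 τ, IsUnit (Φ t)) (hx : IsSolution n t0 τ A g x)
    (hy : ∀ t ∈ Icc t0 τ, y t = C t *ᵥ x t) (hT : T ∈ Icc t0 τ)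
    (hΨ : IsUnit (Psi n k0 t0 C Φ T)) :
    EqOn (Fmap n k0 t0 C Φ g y T x) x (Icc t0 T) := by
  have hsub : ∀ {t}, t ∈ Icc t0 τ → Icc t0 t ⊆ Icc t0 τ := fun ht ↦ Icc_subset_Icc_right ht.2
  have hrestrict : ∀ {t}, t ∈ Icc t0 τ → uIcc t0 t ⊆ uIcc t0 τ := fun ht ↦
    uIcc_subset_uIcc_left (Icc_subset_uIcc ht)
  have hvoc : ∀ t ∈ Icc t0 τ,
      x t = Φ t *ᵥ (x t0 + duhamelIntegral t0 Φ (fun s ↦ g s (x s)) t) := fun t ht ↦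
    (hx.mono_right ht.2).eq_mulVec_add_duhamelIntegral
      (fun i j ↦ (hA i j).mono_set (hrestrict ht)) (hg.mono_right ht.2) (hΦ.mono_right ht.2)
      (fun s hs ↦ hunit s (hsub ht hs)) ht.1
  have hout := integral_output_eq hT.1 (fun i j ↦ (hC i j).mono_set (hrestrict hT))
    (hg.mono_right hT.2) (hΦ.continuousOn.mono (hsub hT)) (fun t ht ↦ hunit t (hsub hT ht))
    (hx.1.mono (hsub hT)) fun t ht ↦
      (hy t (hsub hT ht)).trans (congrArg (C t *ᵥ ·) (hvoc t (hsub hT ht)))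
  have hcancel : (Psi n k0 t0 C Φ T)⁻¹ *ᵥ (Psi n k0 t0 C Φ T *ᵥ x t0) = x t0 := by
    rw [mulVec_mulVec, nonsing_inv_mul _ ((isUnit_iff_isUnit_det _).1 hΨ), one_mulVec]
  intro t ht
  rw [Fmap, hout, add_sub_cancel_right, hcancel, ← mulVec_add]
  exact (hvoc t (hsub hT ht)).symm

theorem continuousOn_Fmap (h0T : t0 ≤ T) (hg : IsCaratheodoryOn t0 T g)
    (hΦ : ContinuousOn Φ (Icc t0 T)) (hunit : ∀ t ∈ Icc t0 T, IsUnit (Φ t))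
    (hz : ContinuousOn z (Icc t0 T)) :
    ContinuousOn (Fmap n k0 t0 C Φ g y T z) (Icc t0 T) := by
  have hq : ContinuousOn (duhamelIntegral t0 Φ fun s ↦ g s (z s)) (Icc t0 T) := by
    have hf := hg.intervalIntegrable_apply h0T hz
    rw [← uIcc_of_le h0T] at *
    exact continuousOn_duhamelIntegral hΦ hunit hf
  have hmulVec : ∀ {v : ℝ → Fin n → ℝ}, ContinuousOn v (Icc t0 T) →
      ContinuousOn (fun t ↦ Φ t *ᵥ v t) (Icc t0 T) := fun hv ↦
    (continuous_fst.matrix_mulVec continuous_snd).comp_continuousOn (hΦ.prodMk hv)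
  exact (hmulVec continuousOn_const).add (hmulVec hq)

end ObservedSystem

section SupNorm

variable {n : ℕ} {a b c M : ℝ} {f g : ℝ → Fin n → ℝ}

theorem supN_le (hab : a ≤ b) (hf : ∀ t ∈ Icc a b, ‖f t‖ ≤ M) : supN n a b f ≤ M :=
  have : Nonempty (Icc a b) := nonempty_Icc_subtype hab
  ciSup_le fun t ↦ hf t t.2

theorem norm_le_supN (hf : ContinuousOn f (Icc a b)) {t : ℝ} (ht : t ∈ Icc a b) :
    ‖f t‖ ≤ supN n a b f := by
  obtain ⟨M, hM⟩ := isCompact_Icc.exists_bound_of_continuousOn hf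
  have hbdd : BddAbove (range fun s : Icc a b ↦ ‖f s‖) :=
    ⟨M, forall_mem_range.2 fun s ↦ hM s s.2⟩
  exact le_ciSup hbdd ⟨t, ht⟩

theorem supN_congr (hfg : EqOn f g (Icc a b)) : supN n a b f = supN n a b g :=
  iSup_congr fun t ↦ by rw [hfg t.2]

theorem supN_mono_right (hf : ContinuousOn f (Icc a b)) (hac : a ≤ c) (hcb : c ≤ b) :
    supN n a c f ≤ supN n a b f :=
  supN_le hac fun _ ht ↦ norm_le_supN hf (Icc_subset_Icc_right hcb ht)

theorem supN_sub_le (hab : a ≤ b) (hf : ContinuousOn f (Icc a b))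
    (hg : ContinuousOn g (Icc a b)) : supN n a b (f - g) ≤ supN n a b f + supN n a b g :=
  supN_le hab fun _ ht ↦
    (norm_sub_le _ _).trans (add_le_add (norm_le_supN hf ht) (norm_le_supN hg ht))

theorem supN_le_add_supN_sub (hab : a ≤ b) (hf : ContinuousOn f (Icc a b))
    (hg : ContinuousOn g (Icc a b)) : supN n a b f ≤ supN n a b g + supN n a b (f - g) :=
  supN_le hab fun _ ht ↦ (norm_le_norm_add_norm_sub' _ _).trans
    (add_le_add (norm_le_supN hg ht) (norm_le_supN (hf.sub hg) ht))

end SupNorm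

section ContractiveIteration

variable {n k : ℕ} {a b ℓ : ℝ} {x : ℝ → Fin n → ℝ} {z : ℕ → ℝ → Fin n → ℝ} {R tseq : ℕ → ℝ}

theorem supN_le_of_supN_sub_le {f : ℝ → Fin n → ℝ} {c r r' ε : ℝ} (hac : a ≤ c) (hcb : c ≤ b)
    (hf : ContinuousOn f (Icc a c)) (hx : ContinuousOn x (Icc a b)) (hxr : supN n a b x ≤ r)
    (hε : supN n a c (f - x) ≤ ε) (hr : r + ε ≤ r') : supN n a c f ≤ r' :=
  (supN_le_add_supN_sub hac hf (hx.mono (Icc_subset_Icc_right hcb))).trans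
    ((add_le_add ((supN_mono_right hx hac hcb).trans hxr) hε).trans hr)

theorem contractiveIteration_bounds (hℓ : ℓ ∈ Icc 0 1)
    (hR : ∀ ν, k < ν → (1 + 2 * ℓ) * R k ≤ R ν)
    (ha : ∀ ν, k ≤ ν → a ≤ tseq ν) (htseq : AntitoneOn tseq (Ici k))
    (hx : ContinuousOn x (Icc a (tseq k))) (hxR : supN n a (tseq k) x ≤ R k)
    (hz : ContinuousOn (z k) (Icc a (tseq k))) (hzR : supN n a (tseq k) (z k) ≤ R k)
    (hcont : ∀ ν, k ≤ ν → ContinuousOn (z ν) (Icc a (tseq ν)) →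
      ContinuousOn (z (ν + 1)) (Icc a (tseq ν)))
    (hstep : ∀ ν, k ≤ ν → ContinuousOn (z ν) (Icc a (tseq ν)) → supN n a (tseq ν) (z ν) ≤ R ν →
      supN n a (tseq ν) (z (ν + 1) - x) ≤ ℓ * supN n a (tseq ν) (z ν - x))
    (ν : ℕ) (hν : k ≤ ν) :
    ContinuousOn (z ν) (Icc a (tseq ν)) ∧ supN n a (tseq ν) (z ν) ≤ R ν ∧
      supN n a (tseq ν) (z ν - x) ≤ ℓ ^ (ν - k) * supN n a (tseq k) (z k - x) := by
  set D := supN n a (tseq k) (z k - x)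
  have hD0 : 0 ≤ D := Real.iSup_nonneg fun _ ↦ norm_nonneg _
  have hD : D ≤ 2 * R k := by
    linarith [supN_sub_le (ha k le_rfl) hz hx]
  induction ν, hν using Nat.le_induction with
  | base => exact ⟨hz, hzR, by simp [D]⟩
  | succ ν hν ih =>
    obtain ⟨hzν, hzRν, hdist⟩ := ih
    have hν' : k ≤ ν + 1 := hν.trans ν.le_succ
    have hle : tseq (ν + 1) ≤ tseq ν := htseq hν hν' ν.le_succ
    have hle_k : tseq ν ≤ tseq k := htseq self_mem_Ici hν hν
    have hz' : ContinuousOn (z (ν + 1)) (Icc a (tseq ν)) := hcont ν hν hzν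
    have hdist' : supN n a (tseq (ν + 1)) (z (ν + 1) - x) ≤ ℓ ^ (ν + 1 - k) * D :=
      calc supN n a (tseq (ν + 1)) (z (ν + 1) - x)
          ≤ supN n a (tseq ν) (z (ν + 1) - x) := supN_mono_right
            (hz'.sub (hx.mono (Icc_subset_Icc_right hle_k))) (ha _ hν') hle
        _ ≤ ℓ * supN n a (tseq ν) (z ν - x) := hstep ν hν hzν hzRν
        _ ≤ ℓ * (ℓ ^ (ν - k) * D) := mul_le_mul_of_nonneg_left hdist hℓ.1
        _ = ℓ ^ (ν + 1 - k) * D := by rw [Nat.sub_add_comm hν, pow_succ', mul_assoc]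
    have hball : R k + ℓ ^ (ν + 1 - k) * D ≤ R (ν + 1) :=
      calc R k + ℓ ^ (ν + 1 - k) * D
          ≤ R k + ℓ * (2 * R k) := by
            gcongr
            · exact hℓ.1
            · exact pow_le_of_le_one hℓ.1 hℓ.2 (Nat.sub_ne_zero_of_lt (Nat.lt_succ_of_le hν))
        _ = (1 + 2 * ℓ) * R k := by ring
        _ ≤ R (ν + 1) := hR _ (Nat.lt_succ_of_le hν)
    have hz_restrict := hz'.mono (Icc_subset_Icc_right hle)
    exact ⟨hz_restrict, supN_le_of_supN_sub_le (ha _ hν') (hle.trans hle_k) hz_restrict hx hxR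
      hdist' hball, hdist'⟩

theorem tendsto_apply_of_supN_sub_le {ε : ℕ → ℝ} (hx : ContinuousOn x (Icc a b))
    (htseq_mem : ∀ ν, k ≤ ν → tseq ν ∈ Icc a b) (htseq : Tendsto tseq atTop (𝓝 a))
    (hz : ∀ ν, k ≤ ν → ContinuousOn (z ν) (Icc a (tseq ν)))
    (hbound : ∀ ν, k ≤ ν → supN n a (tseq ν) (z ν - x) ≤ ε ν) (hε : Tendsto ε atTop (𝓝 0)) :
    Tendsto (fun ν ↦ z ν (tseq ν)) atTop (𝓝 (x a)) := by
  have hmem := htseq_mem k le_rfl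
  have hxlim : Tendsto (fun ν ↦ x (tseq ν)) atTop (𝓝 (x a)) :=
    (hx a ⟨le_rfl, hmem.1.trans hmem.2⟩).tendsto.comp (tendsto_nhdsWithin_iff.2
      ⟨htseq, (eventually_ge_atTop k).mono htseq_mem⟩)
  have hdist : Tendsto (fun ν ↦ z ν (tseq ν) - x (tseq ν)) atTop (𝓝 0) := by
    refine squeeze_zero_norm' ((eventually_ge_atTop k).mono fun ν hν ↦ ?_) hε
    have hxν := hx.mono (Icc_subset_Icc_right (htseq_mem ν hν).2)
    exact (norm_le_supN ((hz ν hν).sub hxν) (right_mem_Icc.2 (htseq_mem ν hν).1)).trans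
      (hbound ν hν)
  simpa only [sub_add_cancel, zero_add] using hdist.add hxlim

end ContractiveIteration

section RegularData

variable {n k0 : ℕ} {t0 τ : ℝ} {A : ℝ → Matrix (Fin n) (Fin n) ℝ}
  {C : ℝ → Matrix (Fin k0) (Fin n) ℝ} {g : ℝ → (Fin n → ℝ) → (Fin n → ℝ)}

theorem intervalIntegrable_of_measurable_of_bounded {f : ℝ → ℝ} {a b M : ℝ} (hab : a ≤ b)
    (hf : Measurable f) (hM : ∀ t ∈ Icc a b, |f t| ≤ M) : IntervalIntegrable f volume a b :=
  (intervalIntegrable_iff_integrableOn_Icc_of_le hab).2 <|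
    IntegrableOn.of_bound measure_Icc_lt_top hf.aestronglyMeasurable M
      (ae_restrict_of_forall_mem measurableSet_Icc hM)

theorem RegularData.intervalIntegrable_system (h : RegularData n k0 t0 τ A C g) (hτ : t0 ≤ τ)
    (i j : Fin n) : IntervalIntegrable (fun t ↦ A t i j) volume t0 τ := by
  obtain ⟨hA, ⟨M, hM⟩, -⟩ := h
  exact intervalIntegrable_of_measurable_of_bounded hτ (hA i j) fun t ht ↦ hM t ht i j

theorem RegularData.intervalIntegrable_output (h : RegularData n k0 t0 τ A C g) (hτ : t0 ≤ τ)
    (i j : Fin n) : IntervalIntegrable (fun t ↦ ((C t)ᵀ * C t) i j) volume t0 τ := by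
  obtain ⟨-, -, hC, ⟨M, hM⟩, -⟩ := h
  have hterm : ∀ l, IntervalIntegrable (fun t ↦ C t l i * C t l j) volume t0 τ := fun l ↦ by
    refine intervalIntegrable_of_measurable_of_bounded (M := M * M) hτ ((hC l i).mul (hC l j))
      fun t ht ↦ ?_
    rw [abs_mul]
    exact mul_le_mul (hM t ht l i) (hM t ht l j) (abs_nonneg _)
      ((abs_nonneg _).trans (hM t ht l i))
  exact intervalIntegrable_finsetSum (s := Finset.univ) fun l _ ↦ hterm l

theorem RegularData.isCaratheodoryOn (h : RegularData n k0 t0 τ A C g) :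
    IsCaratheodoryOn t0 τ g := by
  obtain ⟨-, -, -, -, hmeas, hcont, hbdd⟩ := h
  refine ⟨fun v ↦ (measurable_pi_iff.2 (hmeas v)).stronglyMeasurable, hcont, fun R ↦ ?_⟩
  obtain ⟨M, hM⟩ := hbdd (max R 1) (lt_max_of_lt_right one_pos)
  exact ⟨fun _ ↦ M, integrableOn_const measure_Icc_lt_top.ne,
    fun t ht v hv ↦ hM t ht v (hv.trans (le_max_left R 1))⟩

end RegularData

theorem one_add_two_mul_mul_two_pow_le {ℓ : ℝ} (hℓ : ℓ ≤ 1 / 2) {k ν : ℕ} (hkν : k < ν) :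
    (1 + 2 * ℓ) * 2 ^ k ≤ 2 ^ ν :=
  calc (1 + 2 * ℓ) * 2 ^ k ≤ 2 * 2 ^ k := by gcongr; linarith
    _ = 2 ^ (k + 1) := (pow_succ' 2 k).symm
    _ ≤ 2 ^ ν := pow_le_pow_right₀ one_le_two hkν

theorem stmt0_general {n k0 : ℕ} {t0 τ : ℝ}
    {A : ℝ → Matrix (Fin n) (Fin n) ℝ} {C : ℝ → Matrix (Fin k0) (Fin n) ℝ}
    {g : ℝ → (Fin n → ℝ) → (Fin n → ℝ)}
    (hA : ∀ i j, IntervalIntegrable (fun t ↦ A t i j) volume t0 τ)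
    (hC : ∀ i j, IntervalIntegrable (fun t ↦ ((C t)ᵀ * C t) i j) volume t0 τ)
    (hg : IsCaratheodoryOn t0 τ g)
    {Φ : ℝ → Matrix (Fin n) (Fin n) ℝ} (hΦ : IsFundamental n t0 τ A Φ)
    (hΦinv : ∀ t ∈ Icc t0 τ, IsUnit (Φ t))
    {x : ℝ → (Fin n → ℝ)} (hx : IsSolution n t0 τ A g x)
    {y : ℝ → (Fin k0 → ℝ)} (hy : ∀ t ∈ Icc t0 τ, y t = C t *ᵥ x t)
    {ℓ : ℝ} (hℓ : ℓ ∈ Ico 0 1) {R : ℕ → ℝ} {k : ℕ}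
    (hR : ∀ ν, k < ν → (1 + 2 * ℓ) * R k ≤ R ν) (hxk : supN n t0 τ x ≤ R k)
    {tseq : ℕ → ℝ} (htseq_mem : ∀ ν, k ≤ ν → tseq ν ∈ Icc t0 τ)
    (htseq_anti : AntitoneOn tseq (Ici k)) (htseq_lim : Tendsto tseq atTop (𝓝 t0))
    (hΨ : ∀ ν, k ≤ ν → IsUnit (Psi n k0 t0 C Φ (tseq ν)))
    (hcontr : ∀ ν, k ≤ ν → ∀ d : ℝ → (Fin n → ℝ), ContinuousOn d (Icc t0 (tseq ν)) →
      supN n t0 (tseq ν) d ≤ R ν →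
      supN n t0 (tseq ν) (Fmap n k0 t0 C Φ g y (tseq ν) d - Fmap n k0 t0 C Φ g y (tseq ν) x)
        ≤ ℓ * supN n t0 (tseq ν) (d - x))
    {z : ℕ → ℝ → (Fin n → ℝ)} (hzk_cont : ContinuousOn (z k) (Icc t0 (tseq k)))
    (hzk_bdd : supN n t0 (tseq k) (z k) ≤ R k)
    (hzrec : ∀ ν, k ≤ ν →
      EqOn (z (ν + 1)) (Fmap n k0 t0 C Φ g y (tseq ν) (z ν)) (Icc t0 (tseq ν))) :
    (∀ ν, k ≤ ν → supN n t0 (tseq ν) (z ν) ≤ R ν) ∧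
    (∀ ν, k ≤ ν → supN n t0 (tseq ν) (z (ν + 1) - x)
      ≤ ℓ ^ (ν + 1 - k) * supN n t0 (tseq k) (z k - x)) ∧
    Tendsto (fun ν ↦ z ν (tseq ν)) atTop (𝓝 (x t0)) := by
  have hsub : ∀ ν, k ≤ ν → Icc t0 (tseq ν) ⊆ Icc t0 τ := fun ν hν ↦
    Icc_subset_Icc_right (htseq_mem ν hν).2
  have hfix : ∀ ν, k ≤ ν → EqOn (Fmap n k0 t0 C Φ g y (tseq ν) x) x (Icc t0 (tseq ν)) :=
    fun ν hν ↦ hx.eqOn_Fmap hA hC hg hΦ hΦinv hy (htseq_mem ν hν) (hΨ ν hν)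
  have hcont : ∀ ν, k ≤ ν → ContinuousOn (z ν) (Icc t0 (tseq ν)) →
      ContinuousOn (z (ν + 1)) (Icc t0 (tseq ν)) := fun ν hν hzν ↦
    (continuousOn_Fmap (htseq_mem ν hν).1 (hg.mono_right (htseq_mem ν hν).2)
      (hΦ.continuousOn.mono (hsub ν hν)) (fun t ht ↦ hΦinv t (hsub ν hν ht)) hzν).congr
      (hzrec ν hν)
  have hstep : ∀ ν, k ≤ ν → ContinuousOn (z ν) (Icc t0 (tseq ν)) →
      supN n t0 (tseq ν) (z ν) ≤ R ν →
      supN n t0 (tseq ν) (z (ν + 1) - x) ≤ ℓ * supN n t0 (tseq ν) (z ν - x) :=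
    fun ν hν hzν hzR ↦ (supN_congr fun t ht ↦
      congrArg₂ (· - ·) (hzrec ν hν ht) (hfix ν hν ht).symm).trans_le (hcontr ν hν _ hzν hzR)
  have hbounds := contractiveIteration_bounds ⟨hℓ.1, hℓ.2.le⟩ hR (fun ν hν ↦ (htseq_mem ν hν).1)
    htseq_anti (hx.1.mono (hsub k le_rfl)) ((supN_mono_right hx.1 (htseq_mem k le_rfl).1
      (htseq_mem k le_rfl).2).trans hxk) hzk_cont hzk_bdd hcont hstep
  refine ⟨fun ν hν ↦ (hbounds ν hν).2.1, fun ν hν ↦ ?_, ?_⟩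
  · obtain ⟨hzν, hzR, hdist⟩ := hbounds ν hν
    refine (hstep ν hν hzν hzR).trans ?_
    rw [Nat.sub_add_comm hν, pow_succ', mul_assoc]
    exact mul_le_mul_of_nonneg_left hdist hℓ.1
  · have hpow : Tendsto (fun ν ↦ ℓ ^ (ν - k)) atTop (𝓝 0) :=
      (tendsto_pow_atTop_nhds_zero_of_lt_one hℓ.1 hℓ.2).comp (tendsto_sub_atTop_nat k)
    refine tendsto_apply_of_supN_sub_le hx.1 htseq_mem htseq_lim (fun ν hν ↦ (hbounds ν hν).1)
      (fun ν hν ↦ (hbounds ν hν).2.2) ?_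
    simpa only [zero_mul] using hpow.mul_const _

theorem stmt0 (n k0 : ℕ) (hn : 1 ≤ n) (hk0 : 1 ≤ k0) (t0 τ : ℝ) (ht : t0 < τ)
    (A : ℝ → Matrix (Fin n) (Fin n) ℝ) (C : ℝ → Matrix (Fin k0) (Fin n) ℝ)
    (g : ℝ → (Fin n → ℝ) → (Fin n → ℝ))
    (hreg : RegularData n k0 t0 τ A C g)
    (Φ : ℝ → Matrix (Fin n) (Fin n) ℝ) (hΦ : IsFundamental n t0 τ A Φ)
    (hΦinv : ∀ t ∈ Set.Icc t0 τ, IsUnit (Φ t))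
    (x : ℝ → (Fin n → ℝ)) (hx : IsSolution n t0 τ A g x)
    (y : ℝ → (Fin k0 → ℝ)) (hy : ∀ t ∈ Set.Icc t0 τ, y t = (C t).mulVec (x t))
    (hΨ : ∀ t ∈ Set.Ioc t0 τ, IsUnit (Psi n k0 t0 C Φ t))
    (ℓ : ℝ) (hℓ : ℓ ∈ Set.Ioc (0:ℝ) (1/2))
    -- `R ν = 2^(ν-1)`
    (R : ℕ → ℝ) (hRdef : ∀ ν : ℕ, 1 ≤ ν → R ν = 2 ^ (ν - 1))
    (k : ℕ) (hk : 1 ≤ k) (hxk : supN n t0 τ x < R k)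
    (tseq : ℕ → ℝ)
    (htseq_mem : ∀ ν : ℕ, k ≤ ν → tseq ν ∈ Set.Ioc t0 τ)
    (htseq_dec : ∀ ν : ℕ, k ≤ ν → tseq (ν + 1) < tseq ν)
    (htseq_lim : Filter.Tendsto tseq Filter.atTop (nhds t0))
    (hcontr : ∀ ν : ℕ, k ≤ ν → ∀ d1 d2 : ℝ → (Fin n → ℝ),
      ContinuousOn d1 (Set.Icc t0 (tseq ν)) → ContinuousOn d2 (Set.Icc t0 (tseq ν)) →
      supN n t0 (tseq ν) d1 ≤ R ν → supN n t0 (tseq ν) d2 ≤ R ν →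
      supN n t0 (tseq ν)
          (fun t => Fmap n k0 t0 C Φ g y (tseq ν) d1 t - Fmap n k0 t0 C Φ g y (tseq ν) d2 t)
        ≤ ℓ * supN n t0 (tseq ν) (fun t => d1 t - d2 t))
    (z : ℕ → ℝ → (Fin n → ℝ))
    (hzk_cont : ContinuousOn (z k) (Set.Icc t0 (tseq k)))
    (hzk_bdd : supN n t0 (tseq k) (z k) < R k)
    (hzrec : ∀ ν : ℕ, k ≤ ν → ∀ t ∈ Set.Icc t0 (tseq ν),
      z (ν + 1) t = Fmap n k0 t0 C Φ g y (tseq ν) (z ν) t) :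
    (∀ ν : ℕ, k ≤ ν → supN n t0 (tseq ν) (z ν) ≤ R ν) ∧
    (∀ ν : ℕ, k ≤ ν →
      supN n t0 (tseq ν) (fun t => z (ν + 1) t - x t)
        ≤ ℓ ^ (ν + 1 - k) * supN n t0 (tseq k) (fun t => z k t - x t)) ∧
    Filter.Tendsto (fun ν => z ν (tseq ν)) Filter.atTop (nhds (x t0)) := by
  have hR : ∀ ν, k < ν → (1 + 2 * ℓ) * R k ≤ R ν := fun ν hν ↦ by
    rw [hRdef k hk, hRdef ν (hk.trans hν.le)]
    exact one_add_two_mul_mul_two_pow_le hℓ.2 (Nat.sub_lt_sub_right hk hν)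
  have hRmono : ∀ ν, k ≤ ν → R k ≤ R ν := fun ν hν ↦ by
    rw [hRdef k hk, hRdef ν (hk.trans hν)]
    exact pow_le_pow_right₀ one_le_two (Nat.sub_le_sub_right hν 1)
  have hmem : ∀ ν, k ≤ ν → tseq ν ∈ Icc t0 τ := fun ν hν ↦ Ioc_subset_Icc_self (htseq_mem ν hν)
  have hxR : ∀ ν, k ≤ ν → supN n t0 (tseq ν) x ≤ R ν := fun ν hν ↦
    (supN_mono_right hx.1 (hmem ν hν).1 (hmem ν hν).2).trans (hxk.le.trans (hRmono ν hν))
  exact stmt0_general (hreg.intervalIntegrable_system ht.le) (hreg.intervalIntegrable_output ht.le)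
    hreg.isCaratheodoryOn hΦ hΦinv hx hy ⟨hℓ.1.le, hℓ.2.trans_lt one_half_lt_one⟩ hR hxk.le hmem
    (antitoneOn_nat_Ici_of_succ_le fun ν hν ↦ (htseq_dec ν hν).le) htseq_lim
    (fun ν hν ↦ hΨ _ (htseq_mem ν hν))
    (fun ν hν d hd hdR ↦ hcontr ν hν d x hd (hx.1.mono (Icc_subset_Icc_right (hmem ν hν).2))
      hdR (hxR ν hν))
    hzk_cont hzk_bdd.le hzrec
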